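/- Fix θ₀ > 1 and let X ∈ {−1,1}ⁿ have the Curie–Weiss distribution P_{θ₀,CW}. Let Q_n be the n×n matrix with Q_n(i,j) = 1/n for i ≠ j and 0 on the diagonal, let t_i := Σ_j Q_n(i,j)X_j, and let θ̂_n denote the maximum pseudo-likelihood estimator, i.e., the unique maximizer over θ ∈ ℝ of θ·XᵀQ_nX − Σ_{i=1}^n log cosh(θ t_i), when it exists. Then the maximizer exists with probability tending to 1, and for every t ∈ ℝ, P( θ̂_n exists and √n(θ̂_n − θ₀) ≤ t ) → Φ( t·√R(θ₀) ), where Φ is the standard Gaussian cdf and R(θ₀) := m(θ₀)²·σ²(θ₀); that is, √n(θ̂_n − θ₀) converges in distribution to N(0, R(θ₀)^{-1}). -/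

import Mathlib

open MeasureTheory ProbabilityTheory Filter

noncomputable def spin (b : Bool) : ℝ := if b then 1 else -1

noncomputable def mag (n : ℕ) (x : Fin n → Bool) : ℝ := (∑ i, spin (x i)) / n

/-- Unnormalized Curie–Weiss measure on `{-1,1}ⁿ` (encoded by `Fin n → Bool`). -/
noncomputable def cwUnnorm (n : ℕ) (θ : ℝ) : Measure (Fin n → Bool) :=
  ∑ x : Fin n → Bool,
    ENNReal.ofReal (Real.exp ((n : ℝ) * θ * mag n x ^ 2 / 2)) • Measure.dirac x

/-- The Curie–Weiss model `P_{θ,CW}`. -/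
noncomputable def cwMeasure (n : ℕ) (θ : ℝ) : Measure (Fin n → Bool) :=
  (cwUnnorm n θ Set.univ)⁻¹ • cwUnnorm n θ

/-- The coupling matrix of the Curie–Weiss model: `1/n` off the diagonal, `0` on it. -/
noncomputable def Qcw (n : ℕ) : Matrix (Fin n) (Fin n) ℝ :=
  fun i j => if i = j then 0 else 1 / n

noncomputable def qf {n : ℕ} (B : Matrix (Fin n) (Fin n) ℝ) (v : Fin n → ℝ) : ℝ :=
  ∑ i, ∑ j, v i * B i j * v j

/-- Local fields `t_i = ∑_j Q_n(i,j) X_j`. -/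
noncomputable def tfield (n : ℕ) (x : Fin n → Bool) (i : Fin n) : ℝ :=
  ∑ j, Qcw n i j * spin (x j)

/-- The log pseudo-likelihood objective. -/
noncomputable def PLobj (n : ℕ) (x : Fin n → Bool) (θ : ℝ) : ℝ :=
  θ * qf (Qcw n) (fun i => spin (x i)) - ∑ i, Real.log (Real.cosh (θ * tfield n x i))



lemma hasDerivAt_tanh' (x : ℝ) : HasDerivAt Real.tanh (1 - Real.tanh x ^ 2) x := by
  have h := (Real.hasDerivAt_sinh x).div (Real.hasDerivAt_cosh x) (Real.cosh_pos x).ne'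
  have e : Real.tanh = Real.sinh / Real.cosh := by
    funext y; simp [Real.tanh_eq_sinh_div_cosh]
  rw [← e] at h
  refine h.congr_deriv ?_
  have := Real.cosh_pos x
  rw [Real.tanh_eq_sinh_div_cosh]
  field_simp

lemma deriv_tanh' : deriv Real.tanh = fun x => 1 - Real.tanh x ^ 2 :=
  funext fun x => (hasDerivAt_tanh' x).deriv

lemma continuous_tanh' : Continuous Real.tanh :=
  continuous_iff_continuousAt.2 fun x => (hasDerivAt_tanh' x).continuousAt

lemma tanh_strictMono' : StrictMono Real.tanh := by
  apply strictMono_of_deriv_pos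
  intro x
  rw [deriv_tanh']
  have := Real.tanh_sq_lt_one x
  simp only; linarith

lemma tanh_nonneg' {x : ℝ} (hx : 0 ≤ x) : 0 ≤ Real.tanh x := by
  have := tanh_strictMono'.monotone hx
  simpa using this

lemma tanh_strictConcave : StrictConcaveOn ℝ (Set.Ici 0) Real.tanh := by
  apply StrictAntiOn.strictConcaveOn_of_deriv (convex_Ici 0) continuous_tanh'.continuousOn
  rw [deriv_tanh', interior_Ici]
  intro x hx y hy hxy
  have h1 := tanh_strictMono' hxy
  have h2 := tanh_nonneg' (le_of_lt hx)
  simp only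
  nlinarith

lemma tanh_lip {x y : ℝ} : |Real.tanh x - Real.tanh y| ≤ |x - y| := by
  have := Convex.norm_image_sub_le_of_norm_deriv_le (f := Real.tanh) (s := Set.univ) (C := 1)
    (x := y) (y := x) (fun x _ => (hasDerivAt_tanh' x).differentiableAt) (fun x _ => by
      rw [deriv_tanh']
      have := Real.tanh_sq_lt_one x
      rw [Real.norm_eq_abs, abs_le]; constructor <;> nlinarith [sq_nonneg (Real.tanh x)])
    convex_univ trivial trivial
  simpa using this

lemma hasDerivAt_logcosh (θ x : ℝ) :
    HasDerivAt (fun x => Real.log (Real.cosh (θ * x))) (θ * Real.tanh (θ * x)) x := by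
  have h1 : HasDerivAt (fun x : ℝ => θ * x) θ x := by
    simpa using (hasDerivAt_id x).const_mul θ
  have h := (h1.cosh).log (Real.cosh_pos (θ * x)).ne'
  exact h.congr_deriv (by rw [Real.tanh_eq_sinh_div_cosh]; ring)

noncomputable def GG (θ w : ℝ) : ℝ := θ * w ^ 2 / 2 - Real.log (Real.cosh (θ * w))

lemma hasDerivAt_GG (θ x : ℝ) : HasDerivAt (GG θ) (θ * (x - Real.tanh (θ * x))) x := by
  have h1 : HasDerivAt (fun w : ℝ => θ * w ^ 2 / 2) (θ * x) x := by
    have := (((hasDerivAt_id x).pow 2).const_mul θ).div_const 2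
    exact this.congr_deriv (by simp; ring)
  exact (h1.sub (hasDerivAt_logcosh θ x)).congr_deriv (by ring)

lemma GG_cont (θ : ℝ) : Continuous (GG θ) :=
  continuous_iff_continuousAt.2 fun x => (hasDerivAt_GG θ x).continuousAt

section
variable {θ m : ℝ} (hθ : 1 < θ) (hm : 0 < m) (hmt : Real.tanh (θ * m) = m)
include hθ hm hmt

lemma m_lt_one : m < 1 := by rw [← hmt]; exact Real.tanh_lt_one _

lemma kappa_pos : 0 < 1 - θ * (1 - m ^ 2) := by
  have h0 : 0 < θ * m := by positivity
  obtain ⟨c, hc, h⟩ := exists_deriv_eq_slope Real.tanh h0 continuous_tanh'.continuousOn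
    (fun x _ => (hasDerivAt_tanh' x).differentiableAt.differentiableWithinAt)
  rw [deriv_tanh'] at h
  simp only [hmt, Real.tanh_zero, sub_zero] at h
  have h1 := tanh_strictMono' hc.2
  have h2 := tanh_nonneg' hc.1.le
  rw [hmt] at h1
  have h3 : m / (θ * m) = 1 / θ := by field_simp
  rw [h3] at h
  have h4 : 1 - m ^ 2 < 1 / θ := by rw [← h]; nlinarith
  have h5 : θ * (1 - m ^ 2) < θ * (1 / θ) := by gcongr
  have h6 : θ * (1 / θ) = 1 := by field_simp
  linarith

lemma tanh_tangent {w : ℝ} (hw : m ≤ w) :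
    Real.tanh (θ * w) ≤ m + θ * (1 - m ^ 2) * (w - m) := by
  have key : MonotoneOn (fun w => m + θ * (1 - m ^ 2) * (w - m) - Real.tanh (θ * w)) (Set.Ici m) := by
    have hd : ∀ x, HasDerivAt (fun w => m + θ * (1 - m ^ 2) * (w - m) - Real.tanh (θ * w))
        (θ * (1 - m ^ 2) - θ * (1 - Real.tanh (θ * x) ^ 2)) x := by
      intro x
      have h1 : HasDerivAt (fun x : ℝ => θ * x) θ x := by
        simpa using (hasDerivAt_id x).const_mul θ
      have h2 : HasDerivAt (fun w => Real.tanh (θ * w)) _ x := (hasDerivAt_tanh' (θ * x)).comp x h1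
      have h3 : HasDerivAt (fun w => m + θ * (1 - m ^ 2) * (w - m)) (θ * (1 - m ^ 2)) x := by
        have := (((hasDerivAt_id x).sub_const m).const_mul (θ * (1 - m ^ 2))).const_add m
        simpa using this
      exact (h3.sub h2).congr_deriv (by ring)
    apply monotoneOn_of_deriv_nonneg (convex_Ici m)
    · exact fun x _ => (hd x).continuousAt.continuousWithinAt
    · exact fun x _ => (hd x).differentiableAt.differentiableWithinAt
    · intro x hx
      rw [interior_Ici] at hx
      rw [(hd x).deriv]
      have h1 : m ≤ Real.tanh (θ * x) := by
        conv_lhs => rw [← hmt]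
        apply tanh_strictMono'.monotone
        have : m < x := hx
        gcongr
      have : m ^ 2 ≤ Real.tanh (θ * x) ^ 2 := by gcongr
      nlinarith
  have := key (Set.mem_Ici.2 le_rfl) (Set.mem_Ici.2 hw) hw
  simp only [hmt] at this
  linarith

lemma tanh_ge_chord {w : ℝ} (h0 : 0 ≤ w) (hw : w ≤ m) : w ≤ Real.tanh (θ * w) := by
  have h := tanh_strictConcave.concaveOn.2 (show (0:ℝ) ∈ _ by simp)
    (show θ * m ∈ _ by simp; positivity) (show 0 ≤ 1 - w / m by rw [sub_nonneg, div_le_one hm]; exact hw) (show 0 ≤ w / m by positivity) (by ring)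
  simp only [smul_eq_mul, Real.tanh_zero, mul_zero, zero_add, hmt] at h
  have e1 : w / m * m = w := by field_simp
  have e2 : w / m * (θ * m) = θ * w := by field_simp
  rwa [e1, e2] at h

lemma tanh_half : m / 2 < Real.tanh (θ * (m / 2)) := by
  have h := tanh_strictConcave.2 (show (0:ℝ) ∈ _ by simp)
    (show θ * m ∈ _ by simp; positivity) (by positivity)
    (show (0:ℝ) < 1 / 2 by norm_num) (show (0:ℝ) < 1 / 2 by norm_num) (by norm_num)
  simp only [smul_eq_mul, Real.tanh_zero, mul_zero, zero_add, hmt] at h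
  have e : θ * (m / 2) = 1 / 2 * (θ * m) := by ring
  rw [e]; linarith

lemma tanh_chord2 {w : ℝ} (h0 : m / 2 ≤ w) (hw : w ≤ m) :
    w + (Real.tanh (θ * (m / 2)) - m / 2) / (m / 2) * (m - w) ≤ Real.tanh (θ * w) := by
  have h := tanh_strictConcave.concaveOn.2 (show θ * (m / 2) ∈ _ by simp; positivity)
    (show θ * m ∈ _ by simp; positivity)
    (show 0 ≤ (m - w) / (m / 2) by apply div_nonneg <;> linarith)
    (show 0 ≤ 1 - (m - w) / (m / 2) by rw [sub_nonneg, div_le_one (by linarith)]; linarith)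
    (by ring)
  simp only [smul_eq_mul, hmt] at h
  have e2 : (m - w) / (m / 2) * (θ * (m / 2)) + (1 - (m - w) / (m / 2)) * (θ * m) = θ * w := by
    field_simp; ring
  rw [e2] at h
  refine le_trans (le_of_eq ?_) h
  field_simp; ring

lemma GG_quad : ∃ c > 0, ∀ w, 0 ≤ w → c * (w - m) ^ 2 ≤ GG θ w - GG θ m := by
  have hd : ∀ c x, HasDerivAt (fun w => GG θ w - c * (w - m) ^ 2)
      (θ * (x - Real.tanh (θ * x)) - 2 * c * (x - m)) x := by
    intro c x
    have h3 : HasDerivAt (fun w => c * (w - m) ^ 2) (2 * c * (x - m)) x := by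
      have := (((hasDerivAt_id x).sub_const m).pow 2).const_mul c
      exact this.congr_deriv (by simp; ring)
    exact (hasDerivAt_GG θ x).sub h3
  have hθ0 : 0 < θ := by linarith
  set κ := 1 - θ * (1 - m ^ 2) with hκ
  have hκp : 0 < κ := kappa_pos hθ hm hmt
  set δ := (Real.tanh (θ * (m / 2)) - m / 2) / (m / 2) with hδ
  have hδp : 0 < δ := by
    have := tanh_half hθ hm hmt
    apply div_pos <;> linarith
  have A : ∀ w, m ≤ w → θ * κ / 2 * (w - m) ^ 2 ≤ GG θ w - GG θ m := by
    intro w hw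
    have key : MonotoneOn (fun w => GG θ w - θ * κ / 2 * (w - m) ^ 2) (Set.Ici m) := by
      apply monotoneOn_of_deriv_nonneg (convex_Ici m)
      · exact fun x _ => (hd _ x).continuousAt.continuousWithinAt
      · exact fun x _ => (hd _ x).differentiableAt.differentiableWithinAt
      · intro x hx
        rw [interior_Ici] at hx
        rw [(hd _ x).deriv]
        have h1 := tanh_tangent hθ hm hmt (le_of_lt hx)
        have : 0 ≤ θ * (m + θ * (1 - m ^ 2) * (x - m) - Real.tanh (θ * x)) :=
          mul_nonneg hθ0.le (by linarith)
        rw [hκ]; linarith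
    have := key (Set.mem_Ici.2 le_rfl) (Set.mem_Ici.2 hw) hw
    simp only at this
    have e : θ * κ / 2 * (m - m) ^ 2 = 0 := by ring
    linarith
  have B : ∀ w, m / 2 ≤ w → w ≤ m → θ * δ / 2 * (w - m) ^ 2 ≤ GG θ w - GG θ m := by
    intro w hw1 hw
    have key : AntitoneOn (fun w => GG θ w - θ * δ / 2 * (w - m) ^ 2) (Set.Icc (m / 2) m) := by
      apply antitoneOn_of_deriv_nonpos (convex_Icc _ m)
      · exact fun x _ => (hd _ x).continuousAt.continuousWithinAt
      · exact fun x _ => (hd _ x).differentiableAt.differentiableWithinAt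
      · intro x hx
        rw [interior_Icc] at hx
        rw [(hd _ x).deriv]
        have h1 := tanh_chord2 hθ hm hmt hx.1.le hx.2.le
        rw [← hδ] at h1
        have : 0 ≤ θ * (Real.tanh (θ * x) - (x + δ * (m - x))) :=
          mul_nonneg hθ0.le (by linarith)
        linarith
    have := key ⟨hw1, hw⟩ ⟨by linarith, le_rfl⟩ hw
    simp only at this
    have e : θ * δ / 2 * (m - m) ^ 2 = 0 := by ring
    linarith
  have C : ∀ w, 0 ≤ w → w ≤ m / 2 → θ * δ / 8 * (w - m) ^ 2 ≤ GG θ w - GG θ m := by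
    intro w hw1 hw
    have key : AntitoneOn (GG θ) (Set.Icc 0 m) := by
      apply antitoneOn_of_deriv_nonpos (convex_Icc _ m)
      · exact fun x _ => (hasDerivAt_GG _ x).continuousAt.continuousWithinAt
      · exact fun x _ => (hasDerivAt_GG _ x).differentiableAt.differentiableWithinAt
      · intro x hx
        rw [interior_Icc] at hx
        rw [(hasDerivAt_GG _ x).deriv]
        have h1 := tanh_ge_chord hθ hm hmt hx.1.le hx.2.le
        exact mul_nonpos_of_nonneg_of_nonpos hθ0.le (by linarith)
    have h1 := key ⟨hw1, by linarith⟩ (b := m / 2) ⟨by linarith, by linarith⟩ hw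
    have h2 := B (m / 2) le_rfl (by linarith)
    have h3 : (w - m) ^ 2 ≤ m ^ 2 := by nlinarith
    have h4 : θ * δ / 8 * (w - m) ^ 2 ≤ θ * δ / 8 * m ^ 2 := by gcongr
    nlinarith
  refine ⟨min (θ * κ / 2) (θ * δ / 8), by positivity, fun w hw => ?_⟩
  rcases le_total m w with h | h
  · exact le_trans (by gcongr; exact min_le_left _ _) (A w h)
  · have h8 : min (θ * κ / 2) (θ * δ / 8) * (w - m) ^ 2 ≤ θ * δ / 8 * (w - m) ^ 2 := by
      gcongr; exact min_le_right _ _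
    rcases le_total w (m / 2) with h' | h'
    · exact h8.trans (C w hw h')
    · refine h8.trans (le_trans ?_ (B w h' h))
      have : 0 ≤ θ * δ := by positivity
      gcongr
      linarith

lemma GG_zero : GG θ 0 = 0 := by simp [GG]

lemma GG_m_neg : GG θ m < 0 := by
  obtain ⟨c, hc, h⟩ := GG_quad hθ hm hmt
  have := h 0 le_rfl
  rw [GG_zero hθ hm hmt] at this
  have : 0 < c * (0 - m) ^ 2 := by
    have : (0 - m) ^ 2 = m ^ 2 := by ring
    rw [this]; positivity
  linarith

lemma GG_taylor : Tendsto (fun s => (GG θ (m + s) - GG θ m) / s ^ 2) (nhdsWithin 0 {0}ᶜ)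
    (nhds (θ * (1 - θ * (1 - m ^ 2)) / 2)) := by
  have hf : ∀ s, HasDerivAt (fun s => GG θ (m + s) - GG θ m)
      (θ * ((m + s) - Real.tanh (θ * (m + s)))) s := by
    intro s
    have := (HasDerivAt.comp_const_add m s (hasDerivAt_GG θ (m + s))).sub_const (GG θ m)
    exact this
  have hg : ∀ s : ℝ, HasDerivAt (fun s : ℝ => s ^ 2) (2 * s) s := by
    intro s; simpa using hasDerivAt_pow 2 s
  refine HasDerivAt.lhopital_zero_nhdsNE (f' := fun s => θ * ((m + s) - Real.tanh (θ * (m + s))))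
    (g' := fun s => 2 * s) (Eventually.of_forall hf) (Eventually.of_forall hg) ?_ ?_ ?_ ?_
  · filter_upwards [self_mem_nhdsWithin] with s hs
    have : s ≠ 0 := hs
    positivity
  · have := (hf 0).continuousAt.tendsto
    simp only [add_zero, sub_self] at this
    exact this.mono_left nhdsWithin_le_nhds
  · have := (hg 0).continuousAt.tendsto
    simp only [ne_eq, OfNat.ofNat_ne_zero, not_false_eq_true, zero_pow] at this
    exact this.mono_left nhdsWithin_le_nhds
  · have hd : HasDerivAt (fun s => θ * ((m + s) - Real.tanh (θ * (m + s))))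
        (θ * (1 - θ * (1 - m ^ 2))) 0 := by
      have h1 : HasDerivAt (fun s : ℝ => m + s) 1 0 := by
        simpa using (hasDerivAt_id (0:ℝ)).const_add m
      have h2 : HasDerivAt (fun s : ℝ => Real.tanh (θ * (m + s))) ((1 - m ^ 2) * θ) 0 := by
        have h3 := (h1.const_mul θ)
        have h4 := hasDerivAt_tanh' (θ * (m + 0))
        have := h4.comp (0:ℝ) h3
        refine HasDerivAt.congr_deriv (f := fun s : ℝ => Real.tanh (θ * (m + s))) this ?_
        simp [hmt]
      exact ((h1.sub h2).const_mul θ).congr_deriv (by ring)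
    have := hd.tendsto_slope
    have h2 := this.div_const 2
    refine h2.congr' ?_
    filter_upwards [self_mem_nhdsWithin] with s hs
    have : s ≠ 0 := hs
    simp only [slope_def_field, add_zero, hmt]
    field_simp
    ring

end


lemma sum_exp_spin (n : ℕ) (z : ℝ) :
    ∑ x : Fin n → Bool, Real.exp (z * ∑ i, spin (x i)) = (2 * Real.cosh z) ^ n := by
  have h := Finset.prod_univ_sum (fun _ : Fin n => (Finset.univ : Finset Bool))
    (fun _ b => Real.exp (z * spin b))
  rw [Fintype.piFinset_univ] at h
  simp only [Fintype.sum_bool, Finset.prod_const, Finset.card_univ, Fintype.card_fin] at h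
  have e : Real.exp (z * spin true) + Real.exp (z * spin false) = 2 * Real.cosh z := by
    simp [spin, Real.cosh_eq]; ring
  rw [e] at h
  rw [h]
  refine Finset.sum_congr rfl fun x _ => ?_
  rw [Finset.mul_sum, Real.exp_sum]

noncomputable def CC (n : ℕ) (z : ℝ) : ℝ := ∑ x : Fin n → Bool, Real.exp (z * (n * |mag n x|))

lemma CC_nonneg (n : ℕ) (z : ℝ) : 0 ≤ CC n z := Finset.sum_nonneg fun _ _ => (Real.exp_pos _).le

lemma CC_le (n : ℕ) {z : ℝ} (hz : z ≤ 0) : CC n z ≤ 2 ^ n := by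
  have : CC n z ≤ ∑ x : Fin n → Bool, (1 : ℝ) := by
    refine Finset.sum_le_sum fun x _ => ?_
    rw [Real.exp_le_one_iff]
    exact mul_nonpos_of_nonpos_of_nonneg hz (by positivity)
  simpa using this

lemma n_mag {n : ℕ} (hn : 0 < n) (x : Fin n → Bool) : n * mag n x = ∑ i, spin (x i) := by
  have : (n : ℝ) ≠ 0 := by positivity
  unfold mag; field_simp

lemma CC_add {n : ℕ} (hn : 0 < n) (z : ℝ) : CC n z + CC n (-z) = 2 * (2 * Real.cosh z) ^ n := by
  have h1 := sum_exp_spin n z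
  have h2 := sum_exp_spin n (-z)
  rw [Real.cosh_neg] at h2
  rw [two_mul]
  conv_rhs => { enter [1]; rw [← h1] }
  conv_rhs => { enter [2]; rw [← h2] }
  unfold CC
  rw [← Finset.sum_add_distrib, ← Finset.sum_add_distrib]
  refine Finset.sum_congr rfl fun x _ => ?_
  rw [← n_mag hn]
  rcases abs_cases (mag n x) with h | h
  · rw [h.1]
  · rw [h.1, add_comm]; congr 2 <;> ring

noncomputable def HH (θ m : ℝ) (n : ℕ) (v : ℝ) : ℝ :=
  CC n (θ * (m + v / √n)) * Real.exp (-(n * θ * (m + v / √n) ^ 2 / 2)) *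
    (Real.exp (n * GG θ m) / (2 * 2 ^ n))

lemma HH_cosh (θ m w : ℝ) (n : ℕ) :
    2 * (2 * Real.cosh (θ * w)) ^ n * Real.exp (-(n * θ * w ^ 2 / 2)) *
    (Real.exp (n * GG θ m) / (2 * 2 ^ n)) = Real.exp (-(n * (GG θ w - GG θ m))) := by
  have : Real.cosh (θ * w) ^ n = Real.exp (n * Real.log (Real.cosh (θ * w))) := by
    rw [mul_comm (n:ℝ), Real.exp_mul, Real.exp_log (Real.cosh_pos _), Real.rpow_natCast]
  rw [mul_pow, this]
  have e : (2:ℝ) ^ n ≠ 0 := by positivity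
  have e2 : Real.exp (-(n * (GG θ w - GG θ m))) = Real.exp (n * Real.log (Real.cosh (θ * w))) *
    Real.exp (-(n * θ * w ^ 2 / 2)) * Real.exp (n * GG θ m) := by
    rw [← Real.exp_add, ← Real.exp_add]; congr 1
    conv_lhs => unfold GG
    conv_rhs => unfold GG
    ring
  rw [e2]
  field_simp

lemma HH_nonneg (θ m : ℝ) (n : ℕ) (v : ℝ) : 0 ≤ HH θ m n v := by
  have := CC_nonneg n (θ * (m + v / √n))
  unfold HH; positivity

lemma HH_bound {θ m : ℝ} (hθ : 1 < θ) (hm : 0 < m) (hmt : Real.tanh (θ * m) = m) :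
    ∃ c > 0, ∀ n : ℕ, 0 < n → ∀ v, HH θ m n v ≤ Real.exp (-c * v ^ 2) := by
  obtain ⟨c, hc, hq⟩ := GG_quad hθ hm hmt
  refine ⟨min c (min (θ / 4) (c / 2)), by positivity, fun n hn v => ?_⟩
  set w := m + v / √n with hw
  have hn' : (0:ℝ) < n := by positivity
  have hv : v ^ 2 = n * (w - m) ^ 2 := by
    rw [hw, add_sub_cancel_left, div_pow, Real.sq_sqrt hn'.le]; field_simp
  rcases le_total 0 w with h0 | h0
  · have h1 : CC n (θ * w) ≤ 2 * (2 * Real.cosh (θ * w)) ^ n := by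
      rw [← CC_add hn]; linarith [CC_nonneg n (-(θ * w))]
    have h2 : HH θ m n v ≤ Real.exp (-(n * (GG θ w - GG θ m))) := by
      rw [← HH_cosh]; unfold HH; rw [← hw]; gcongr
    refine h2.trans (Real.exp_le_exp.2 ?_)
    have h3 := hq w h0
    have h4 : min c (min (θ / 4) (c / 2)) * (w - m) ^ 2 ≤ c * (w - m) ^ 2 := by
      gcongr; exact min_le_left _ _
    have h5 : n * (min c (min (θ / 4) (c / 2)) * (w - m) ^ 2) ≤ n * (GG θ w - GG θ m) := by
      gcongr; linarith
    rw [hv]; linarith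
  · have h1 : CC n (θ * w) ≤ 2 ^ n := CC_le n (mul_nonpos_of_nonneg_of_nonpos (by linarith) h0)
    have h2 : HH θ m n v ≤ 2 ^ n * Real.exp (-(n * θ * w ^ 2 / 2)) *
      (Real.exp (n * GG θ m) / (2 * 2 ^ n)) := by
      unfold HH; rw [← hw]; gcongr
    have h3 : (2:ℝ) ^ n * Real.exp (-(n * θ * w ^ 2 / 2)) *
      (Real.exp (n * GG θ m) / (2 * 2 ^ n)) ≤ Real.exp (-(n * (θ * w ^ 2 / 2 - GG θ m))) := by
      have : Real.exp (-(n * (θ * w ^ 2 / 2 - GG θ m))) =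
        Real.exp (-(n * θ * w ^ 2 / 2)) * Real.exp (n * GG θ m) := by
        rw [← Real.exp_add]; congr 1; ring
      rw [this]
      have e : (2:ℝ) ^ n ≠ 0 := by positivity
      have e3 : (2:ℝ) ^ n * Real.exp (-(n * θ * w ^ 2 / 2)) *
        (Real.exp (n * GG θ m) / (2 * 2 ^ n)) = Real.exp (-(n * θ * w ^ 2 / 2)) * Real.exp (n * GG θ m) / 2 := by
        field_simp
      rw [e3]
      have := mul_pos (Real.exp_pos (-(n * θ * w ^ 2 / 2))) (Real.exp_pos (n * GG θ m))
      linarith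
    refine h2.trans (h3.trans (Real.exp_le_exp.2 ?_))
    have h4 := hq 0 le_rfl
    rw [GG_zero hθ hm hmt] at h4
    set d := min c (min (θ / 4) (c / 2))
    have hd0 : 0 < d := by positivity
    have d1 : d ≤ θ / 4 := (min_le_right _ _).trans (min_le_left _ _)
    have d2 : d ≤ c / 2 := (min_le_right _ _).trans (min_le_right _ _)
    have h5 : (w - m) ^ 2 ≤ 2 * w ^ 2 + 2 * m ^ 2 := by nlinarith [sq_nonneg (w + m)]
    have h6 : d * (w - m) ^ 2 ≤ d * (2 * w ^ 2 + 2 * m ^ 2) := by gcongr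
    have h7 : d * w ^ 2 ≤ θ / 4 * w ^ 2 := by gcongr
    have h8 : d * m ^ 2 ≤ c / 2 * m ^ 2 := by gcongr
    have h9 : d * (w - m) ^ 2 ≤ θ * w ^ 2 / 2 - GG θ m := by nlinarith
    have h10 : n * (d * (w - m) ^ 2) ≤ n * (θ * w ^ 2 / 2 - GG θ m) := by gcongr
    rw [hv]; linarith

lemma HH_tendsto {θ m : ℝ} (hθ : 1 < θ) (hm : 0 < m) (hmt : Real.tanh (θ * m) = m) (v : ℝ) :
    Tendsto (fun n : ℕ => HH θ m n v) atTop
      (nhds (Real.exp (-(θ * (1 - θ * (1 - m ^ 2)) / 2) * v ^ 2))) := by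
  have hs : Tendsto (fun n : ℕ => √(n:ℝ)) atTop atTop :=
    Real.tendsto_sqrt_atTop.comp tendsto_natCast_atTop_atTop
  have hv0 : Tendsto (fun n : ℕ => v / √(n:ℝ)) atTop (nhds 0) := tendsto_const_nhds.div_atTop hs
  have main : Tendsto (fun n : ℕ => (n:ℝ) * (GG θ (m + v / √n) - GG θ m)) atTop
      (nhds (θ * (1 - θ * (1 - m ^ 2)) / 2 * v ^ 2)) := by
    rcases eq_or_ne v 0 with rfl | hv
    · simp
    · have h1 : Tendsto (fun n : ℕ => v / √(n:ℝ)) atTop (nhdsWithin 0 {0}ᶜ) := by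
        refine tendsto_nhdsWithin_iff.2 ⟨hv0, ?_⟩
        filter_upwards [eventually_gt_atTop 0] with n hn
        have : (0:ℝ) < √n := by positivity
        simp [hv, this.ne']
      have h2 := ((GG_taylor hθ hm hmt).comp h1).mul_const (v ^ 2)
      refine h2.congr' ?_
      filter_upwards [eventually_gt_atTop 0] with n hn
      have : (0:ℝ) < n := by positivity
      simp only [Function.comp]
      rw [div_pow, Real.sq_sqrt this.le]
      field_simp
  have main2 : Tendsto (fun n : ℕ => Real.exp (-((n:ℝ) * (GG θ (m + v / √n) - GG θ m)))) atTop
      (nhds (Real.exp (-(θ * (1 - θ * (1 - m ^ 2)) / 2) * v ^ 2))) := by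
    rw [neg_mul]
    exact (Real.continuous_exp.tendsto _).comp main.neg
  have err : Tendsto (fun n : ℕ => Real.exp ((n:ℝ) * GG θ m)) atTop (nhds 0) := by
    apply Real.tendsto_exp_atBot.comp
    exact tendsto_natCast_atTop_atTop.atTop_mul_const_of_neg (GG_m_neg hθ hm hmt)
  have low := main2.sub err
  rw [sub_zero] at low
  have hpos : ∀ᶠ n : ℕ in atTop, 0 < m + v / √(n:ℝ) := by
    have := hv0.const_add m
    rw [add_zero] at this
    exact this.eventually (lt_mem_nhds hm)
  refine tendsto_of_tendsto_of_tendsto_of_le_of_le' low main2 ?_ ?_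
  · filter_upwards [hpos, eventually_gt_atTop 0] with n hw hn
    set w := m + v / √(n:ℝ) with hwd
    have h1 : CC n (-(θ * w)) ≤ 2 ^ n := CC_le n (by
      have : 0 < θ * w := by positivity
      linarith)
    have h2 := CC_add hn (θ * w)
    rw [← HH_cosh, ← h2]; unfold HH; rw [← hwd]
    have h3 : CC n (-(θ * w)) * Real.exp (-(n * θ * w ^ 2 / 2)) *
      (Real.exp (n * GG θ m) / (2 * 2 ^ n)) ≤ 2 ^ n * 1 * (Real.exp (n * GG θ m) / (1 * 2 ^ n)) := by
      have : Real.exp (-(n * θ * w ^ 2 / 2)) ≤ 1 := by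
        rw [Real.exp_le_one_iff]
        have : 0 ≤ n * θ * w ^ 2 / 2 := by positivity
        linarith
      gcongr
      norm_num
    have h4 : 2 ^ n * 1 * (Real.exp (n * GG θ m) / (1 * 2 ^ n)) = Real.exp (n * GG θ m) := by
      have e : (2:ℝ) ^ n ≠ 0 := by positivity
      field_simp
    linarith
  · filter_upwards [hpos, eventually_gt_atTop 0] with n hw hn
    set w := m + v / √(n:ℝ) with hwd
    have h2 := CC_add hn (θ * w)
    have := CC_nonneg n (-(θ * w))
    rw [← HH_cosh]; unfold HH; rw [← hwd]
    gcongr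
    linarith


noncomputable def wt (n : ℕ) (θ : ℝ) (x : Fin n → Bool) : ℝ :=
  Real.exp ((n : ℝ) * θ * mag n x ^ 2 / 2)

noncomputable def ZZ (n : ℕ) (θ : ℝ) : ℝ := ∑ x : Fin n → Bool, wt n θ x

lemma ZZ_pos (n : ℕ) (θ : ℝ) : 0 < ZZ n θ :=
  Finset.sum_pos (fun _ _ => Real.exp_pos _) Finset.univ_nonempty

lemma cwUnnorm_univ (n : ℕ) (θ : ℝ) : cwUnnorm n θ Set.univ = ENNReal.ofReal (ZZ n θ) := by
  unfold cwUnnorm ZZ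
  have h0 : ∀ x ∈ (Finset.univ : Finset (Fin n → Bool)), 0 ≤ wt n θ x :=
    fun x _ => (Real.exp_pos _).le
  rw [ENNReal.ofReal_sum_of_nonneg h0]
  simp [wt]

instance cw_prob (n : ℕ) (θ : ℝ) : IsProbabilityMeasure (cwMeasure n θ) := by
  constructor
  unfold cwMeasure
  rw [Measure.smul_apply, cwUnnorm_univ, smul_eq_mul]
  apply ENNReal.inv_mul_cancel
  · simpa using ZZ_pos n θ
  · simp

lemma cw_integral (n : ℕ) (θ : ℝ) (f : (Fin n → Bool) → ℂ) :
    ∫ x, f x ∂(cwMeasure n θ) = (∑ x, (wt n θ x : ℂ) * f x) / (ZZ n θ : ℂ) := by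
  unfold cwMeasure
  rw [integral_smul_measure, cwUnnorm_univ]
  unfold cwUnnorm
  rw [integral_finsetSum_measure]
  · simp only [integral_smul_measure, integral_dirac]
    have : (ENNReal.ofReal (ZZ n θ))⁻¹.toReal = (ZZ n θ)⁻¹ := by
      rw [ENNReal.toReal_inv, ENNReal.toReal_ofReal (ZZ_pos n θ).le]
    rw [this, div_eq_inv_mul]
    simp only [Complex.real_smul, Complex.ofReal_inv]
    congr 1
    refine Finset.sum_congr rfl fun x _ => ?_
    rw [ENNReal.toReal_ofReal (Real.exp_pos _).le]; rfl
  · intro x _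
    apply Integrable.smul_measure
    · exact integrable_dirac (by simp)
    · simp

noncomputable def UU (n : ℕ) (m : ℝ) (x : Fin n → Bool) : ℝ := √n * (|mag n x| - m)

noncomputable def KK (b ξ : ℝ) : ℂ := ∫ v : ℝ, Complex.exp (Complex.I * ξ * v) * Complex.exp (-(b:ℂ) * v ^ 2)

lemma KK_eq {b : ℝ} (hb : 0 < b) (ξ : ℝ) :
    KK b ξ = (Real.pi / (b : ℂ)) ^ (1 / 2 : ℂ) * Complex.exp (-(ξ:ℂ) ^ 2 / (4 * b)) :=
  fourierIntegral_gaussian (by simpa using hb) ξ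

lemma KK_ne {b : ℝ} (hb : 0 < b) (ξ : ℝ) : KK b ξ ≠ 0 := by
  rw [KK_eq hb]
  refine mul_ne_zero ?_ (Complex.exp_ne_zero _)
  rw [Ne, Complex.cpow_eq_zero_iff]
  simp [hb.ne', Real.pi_ne_zero]

lemma KK_ratio {b : ℝ} (hb : 0 < b) (ξ : ℝ) :
    KK b ξ = KK b 0 * Complex.exp (-(ξ:ℂ) ^ 2 / (4 * b)) := by
  rw [KK_eq hb, KK_eq hb]; simp

lemma gauss_integrable {b : ℝ} (hb : 0 < b) (ξ : ℝ) :
    Integrable (fun v : ℝ => Complex.exp (Complex.I * ξ * v) * Complex.exp (-(b:ℂ) * v ^ 2)) := by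
  have := integrable_cexp_quadratic (b := (b:ℂ)) (by simpa using hb) (Complex.I * ξ) 0
  refine this.congr (Eventually.of_forall fun v => ?_)
  simp only
  rw [← Complex.exp_add]; congr 1; ring

lemma shift_eq (b ξ u v : ℝ) :
    Complex.exp (Complex.I * ξ * v) * Complex.exp (-(b:ℂ) * (v - u) ^ 2) =
    Complex.exp (Complex.I * ξ * u) * (Complex.exp (Complex.I * ξ * ((v - u : ℝ):ℂ)) *
      Complex.exp (-(b:ℂ) * ((v - u : ℝ):ℂ) ^ 2)) := by
  rw [← Complex.exp_add, ← Complex.exp_add, ← Complex.exp_add]; congr 1; push_cast; ring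

lemma HH_expand {n : ℕ} (hn : 0 < n) (θ m v : ℝ) :
    HH θ m n v = ∑ x : Fin n → Bool, (Real.exp (n * GG θ m) / (2 * 2 ^ n)) *
      (wt n θ x * Real.exp (-(θ / 2) * (v - UU n m x) ^ 2)) := by
  unfold HH CC
  rw [Finset.sum_mul, Finset.sum_mul]
  refine Finset.sum_congr rfl fun x _ => ?_
  rw [mul_comm]
  congr 1
  unfold wt UU
  rw [← Real.exp_add, ← Real.exp_add]
  congr 1
  have hn' : (0:ℝ) < n := by positivity
  set r := √(n:ℝ) with hr
  have hr0 : 0 < r := by positivity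
  have hnr : (n:ℝ) = r ^ 2 := (Real.sq_sqrt hn'.le).symm
  rw [hnr, ← sq_abs (mag n x)]
  field_simp
  ring

lemma HH_integral {n : ℕ} (hn : 0 < n) {θ : ℝ} (hθ : 0 < θ) (m ξ : ℝ) :
    ∫ v : ℝ, Complex.exp (Complex.I * ξ * v) * (HH θ m n v : ℂ) =
    ((Real.exp (n * GG θ m) / (2 * 2 ^ n) : ℝ) : ℂ) *
      (∑ x : Fin n → Bool, (wt n θ x : ℂ) * Complex.exp (Complex.I * ξ * UU n m x)) * KK (θ / 2) ξ := by
  have e : ∀ v : ℝ, Complex.exp (Complex.I * ξ * v) * (HH θ m n v : ℂ) =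
      ∑ x : Fin n → Bool, ((Real.exp (n * GG θ m) / (2 * 2 ^ n) : ℝ) : ℂ) * (wt n θ x : ℂ) *
        Complex.exp (Complex.I * ξ * UU n m x) *
        (Complex.exp (Complex.I * ξ * ((v - UU n m x : ℝ):ℂ)) *
          Complex.exp (-((θ / 2 : ℝ):ℂ) * ((v - UU n m x : ℝ):ℂ) ^ 2)) := by
    intro v
    rw [HH_expand hn, Complex.ofReal_sum, Finset.mul_sum]
    refine Finset.sum_congr rfl fun x _ => ?_
    have := shift_eq (θ / 2) ξ (UU n m x) v
    rw [mul_assoc _ (Complex.exp (Complex.I * ξ * UU n m x)), ← this]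
    push_cast
    ring
  simp_rw [e]
  rw [integral_finsetSum]
  · rw [Finset.mul_sum, Finset.sum_mul]
    refine Finset.sum_congr rfl fun x _ => ?_
    rw [integral_const_mul]
    have := integral_sub_right_eq_self (μ := volume) (fun v : ℝ => Complex.exp (Complex.I * ξ * v) *
      Complex.exp (-((θ / 2 : ℝ):ℂ) * v ^ 2)) (UU n m x)
    rw [this]
    unfold KK
    ring
  · intro x _
    apply Integrable.const_mul
    exact (gauss_integrable (b := θ / 2) (by positivity) ξ).comp_sub_right (UU n m x)

lemma HH_int_tendsto {θ m : ℝ} (hθ : 1 < θ) (hm : 0 < m) (hmt : Real.tanh (θ * m) = m) (ξ : ℝ) :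
    Tendsto (fun n : ℕ => ∫ v : ℝ, Complex.exp (Complex.I * ξ * v) * (HH θ m n v : ℂ)) atTop
      (nhds (KK (θ * (1 - θ * (1 - m ^ 2)) / 2) ξ)) := by
  obtain ⟨c, hc, hb⟩ := HH_bound hθ hm hmt
  unfold KK
  apply tendsto_integral_filter_of_dominated_convergence (fun v => Real.exp (-c * v ^ 2))
  · refine Eventually.of_forall fun n => Continuous.aestronglyMeasurable ?_
    unfold HH CC
    fun_prop
  · filter_upwards [eventually_gt_atTop 0] with n hn
    refine Eventually.of_forall fun v => ?_
    have e : Complex.I * ξ * v = ((ξ * v : ℝ) : ℂ) * Complex.I := by push_cast; ring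
    rw [norm_mul, e, Complex.norm_exp_ofReal_mul_I, one_mul, Complex.norm_real, Real.norm_eq_abs,
      abs_of_nonneg (HH_nonneg _ _ _ _)]
    exact hb n hn v
  · exact integrable_exp_neg_mul_sq hc
  · refine Eventually.of_forall fun v => ?_
    apply Tendsto.const_mul
    have := (Complex.continuous_ofReal.tendsto _).comp (HH_tendsto hθ hm hmt v)
    have e : Complex.exp (-((θ * (1 - θ * (1 - m ^ 2)) / 2 : ℝ):ℂ) * (v:ℂ) ^ 2) =
        ((Real.exp (-(θ * (1 - θ * (1 - m ^ 2)) / 2) * v ^ 2) : ℝ) : ℂ) := by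
      push_cast; rfl
    rw [e]
    exact this

noncomputable def sig2 (θ m : ℝ) : ℝ := (1 - m ^ 2) / (1 - θ * (1 - m ^ 2))

lemma charFun_eq {n : ℕ} (θ m ξ : ℝ) :
    charFun ((cwMeasure n θ).map (UU n m)) ξ =
      (∑ x : Fin n → Bool, (wt n θ x : ℂ) * Complex.exp (Complex.I * ξ * UU n m x)) / (ZZ n θ : ℂ) := by
  rw [charFun_apply_real, integral_map (by fun_prop) (by fun_prop), cw_integral]
  congr 1
  refine Finset.sum_congr rfl fun x _ => ?_
  congr 2; ring

lemma charFun_tendsto {θ m : ℝ} (hθ : 1 < θ) (hm : 0 < m) (hmt : Real.tanh (θ * m) = m) (ξ : ℝ) :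
    Tendsto (fun n : ℕ => charFun ((cwMeasure n θ).map (UU n m)) ξ) atTop
      (nhds (charFun (gaussianReal 0 (sig2 θ m).toNNReal) ξ)) := by
  have hκ := kappa_pos hθ hm hmt
  have hm1 := m_lt_one hθ hm hmt
  have hθ0 : 0 < θ := by linarith
  set κ := 1 - θ * (1 - m ^ 2) with hκd
  have hb : 0 < θ * κ / 2 := by positivity
  have h1 := HH_int_tendsto hθ hm hmt ξ
  have h0 := HH_int_tendsto hθ hm hmt 0
  rw [← hκd] at h1 h0
  have h2 := (h1.div h0 (KK_ne hb 0)).mul_const (KK (θ / 2) 0 / KK (θ / 2) ξ)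
  have hs : 0 ≤ sig2 θ m := by
    unfold sig2
    apply div_nonneg
    · nlinarith
    · exact hκ.le
  have elim : KK (θ * κ / 2) ξ / KK (θ * κ / 2) 0 * (KK (θ / 2) 0 / KK (θ / 2) ξ) =
      charFun (gaussianReal 0 (sig2 θ m).toNNReal) ξ := by
    have hh : 0 < θ / 2 := by positivity
    rw [KK_ratio hb ξ, KK_ratio hh ξ, charFun_gaussianReal]
    have n1 := KK_ne hb 0
    have n2 := KK_ne hh 0
    have n3 := Complex.exp_ne_zero (-(ξ:ℂ) ^ 2 / (4 * ((θ / 2 : ℝ):ℂ)))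
    have ee : Complex.exp (-(ξ:ℂ) ^ 2 / (4 * ((θ * κ / 2 : ℝ):ℂ))) =
        Complex.exp (ξ * ((0:ℝ):ℂ) * Complex.I - (((sig2 θ m).toNNReal : ℝ):ℂ) * ξ ^ 2 / 2) *
        Complex.exp (-(ξ:ℂ) ^ 2 / (4 * ((θ / 2 : ℝ):ℂ))) := by
      rw [← Complex.exp_add]; congr 1
      rw [Real.coe_toNNReal _ hs]
      unfold sig2
      rw [← hκd]
      have e1 : -ξ ^ 2 / (4 * (θ * κ / 2)) = ξ * 0 - (1 - m ^ 2) / κ * ξ ^ 2 / 2 + -ξ ^ 2 / (4 * (θ / 2)) := by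
        field_simp
        rw [hκd]; ring
      have e2 := congrArg Complex.ofReal e1
      push_cast at e2 ⊢
      rw [e2]; ring
    rw [ee]
    field_simp
  rw [elim] at h2
  refine h2.congr' ?_
  filter_upwards [eventually_gt_atTop 0] with n hn
  simp only [Pi.div_apply]
  rw [HH_integral hn hθ0, HH_integral hn hθ0, charFun_eq]
  have n1 := KK_ne (b := θ / 2) (by positivity) 0
  have n2 := KK_ne (b := θ / 2) (by positivity) ξ
  have n3 : ((Real.exp (n * GG θ m) / (2 * 2 ^ n) : ℝ) : ℂ) ≠ 0 := by
    rw [Ne, Complex.ofReal_eq_zero]; positivity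
  have e : (∑ x : Fin n → Bool, (wt n θ x : ℂ) * Complex.exp (Complex.I * (0:ℝ) * UU n m x)) = (ZZ n θ : ℂ) := by
    simp [ZZ]
  have n4 : (ZZ n θ : ℂ) ≠ 0 := by
    rw [Ne, Complex.ofReal_eq_zero]; exact (ZZ_pos n θ).ne'
  rw [e]
  field_simp


lemma tanh_ratio {τ a b : ℝ} (hτ : 0 < τ) (ha : 0 ≤ a) (hab : a ≤ b) :
    a * Real.tanh (τ * b) ≤ b * Real.tanh (τ * a) := by
  rcases ha.eq_or_lt with rfl | ha0
  · simp
  have hb : 0 < b := by linarith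
  have h := tanh_strictConcave.concaveOn.2 (show (0:ℝ) ∈ _ by simp)
    (show τ * b ∈ _ by simp; positivity) (show 0 ≤ 1 - a / b by
      rw [sub_nonneg, div_le_one hb]; exact hab) (show 0 ≤ a / b by positivity) (by ring)
  simp only [smul_eq_mul, Real.tanh_zero, mul_zero, zero_add] at h
  have e2 : a / b * (τ * b) = τ * a := by field_simp
  rw [e2, div_mul_eq_mul_div, div_le_iff₀ hb] at h
  linarith

lemma tendsto_tanh_top : Tendsto Real.tanh atTop (nhds 1) := by
  have e : Real.tanh = fun x => 1 - 2 / (Real.exp (2 * x) + 1) := by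
    funext x
    rw [Real.tanh_eq, Real.exp_neg, two_mul, Real.exp_add]
    have := Real.exp_pos x
    field_simp
    ring
  rw [e]
  have h1 : Tendsto (fun x : ℝ => Real.exp (2 * x) + 1) atTop atTop :=
    tendsto_atTop_add_const_right _ _
      (Real.tendsto_exp_atTop.comp (tendsto_id.const_mul_atTop (by norm_num)))
  have h2 : Tendsto (fun x : ℝ => 2 / (Real.exp (2 * x) + 1)) atTop (nhds 0) :=
    tendsto_const_nhds.div_atTop h1
  simpa using h2.const_sub 1

lemma tendsto_mul_tanh (t : ℝ) : Tendsto (fun θ => t * Real.tanh (θ * t)) atTop (nhds |t|) := by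
  rcases lt_trichotomy t 0 with h | h | h
  · have h1 : Tendsto (fun θ : ℝ => θ * (-t)) atTop atTop := tendsto_id.atTop_mul_const (by linarith)
    have := (tendsto_tanh_top.comp h1).const_mul (-t)
    rw [mul_one] at this
    rw [abs_of_neg h]
    refine this.congr fun θ => ?_
    simp only [Function.comp, mul_neg, Real.tanh_neg]; ring
  · simp [h]
  · have h1 : Tendsto (fun θ : ℝ => θ * t) atTop atTop := tendsto_id.atTop_mul_const h
    have := (tendsto_tanh_top.comp h1).const_mul t
    rw [mul_one] at this
    rw [abs_of_pos h]
    exact this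

lemma unique_max {f D : ℝ → ℝ} (hf : ∀ x, HasDerivAt f (D x) x) (hD : StrictAnti D)
    (hc : Continuous D) {T1 T2 : ℝ} (h1 : 0 < D T1) (h2 : D T2 < 0) :
    ∃! θ, IsMaxOn f Set.univ θ := by
  have z : ∀ θ, IsMaxOn f Set.univ θ → D θ = 0 := fun θ h =>
    (h.isLocalMax univ_mem).hasDerivAt_eq_zero (hf θ)
  obtain ⟨c, hc0⟩ : ∃ c, D c = 0 := by
    have := mem_range_of_exists_le_of_exists_ge hc ⟨T2, h2.le⟩ ⟨T1, h1.le⟩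
    exact this
  refine ⟨c, ?_, fun y hy => hD.injective (by rw [z y hy, hc0])⟩
  intro y _
  show f y ≤ f c
  rcases le_total y c with h | h
  · have : MonotoneOn f (Set.Iic c) := by
      apply monotoneOn_of_deriv_nonneg (convex_Iic c)
      · exact fun x _ => (hf x).continuousAt.continuousWithinAt
      · exact fun x _ => (hf x).differentiableAt.differentiableWithinAt
      · intro x hx
        rw [interior_Iic] at hx
        rw [(hf x).deriv, ← hc0]
        exact hD.antitone (le_of_lt hx)
    exact this (Set.mem_Iic.2 h) (Set.mem_Iic.2 le_rfl) h
  · have : AntitoneOn f (Set.Ici c) := by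
      apply antitoneOn_of_deriv_nonpos (convex_Ici c)
      · exact fun x _ => (hf x).continuousAt.continuousWithinAt
      · exact fun x _ => (hf x).differentiableAt.differentiableWithinAt
      · intro x hx
        rw [interior_Ici] at hx
        rw [(hf x).deriv, ← hc0]
        exact hD.antitone (le_of_lt hx)
    exact this (Set.mem_Ici.2 le_rfl) (Set.mem_Ici.2 h) h

noncomputable def DD (n : ℕ) (x : Fin n → Bool) (θ : ℝ) : ℝ :=
  ∑ i, (spin (x i) * tfield n x i - tfield n x i * Real.tanh (θ * tfield n x i))

lemma qf_eq (n : ℕ) (x : Fin n → Bool) :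
    qf (Qcw n) (fun i => spin (x i)) = ∑ i, spin (x i) * tfield n x i := by
  unfold qf tfield
  refine Finset.sum_congr rfl fun i _ => ?_
  rw [Finset.mul_sum]
  exact Finset.sum_congr rfl fun j _ => by ring

lemma hasDerivAt_PL (n : ℕ) (x : Fin n → Bool) (θ : ℝ) :
    HasDerivAt (PLobj n x) (DD n x θ) θ := by
  have h1 : ∀ i, HasDerivAt (fun θ => Real.log (Real.cosh (θ * tfield n x i)))
      (tfield n x i * Real.tanh (θ * tfield n x i)) θ := by
    intro i
    have := hasDerivAt_logcosh (tfield n x i) θ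
    simp_rw [mul_comm (tfield n x i)] at this ⊢
    exact this
  have h2 := HasDerivAt.fun_sum (u := Finset.univ) (fun i _ => h1 i)
  have h3 := ((hasDerivAt_id θ).mul_const (qf (Qcw n) (fun i => spin (x i)))).sub h2
  refine HasDerivAt.congr_deriv (f := PLobj n x) h3 ?_
  unfold DD
  rw [one_mul, qf_eq, Finset.sum_sub_distrib]

lemma mul_tanh_mono (t : ℝ) : Monotone (fun θ => t * Real.tanh (θ * t)) := by
  intro a b hab
  simp only
  rcases le_total 0 t with h | h
  · have := tanh_strictMono'.monotone (mul_le_mul_of_nonneg_right hab h)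
    exact mul_le_mul_of_nonneg_left this h
  · have := tanh_strictMono'.monotone (mul_le_mul_of_nonpos_right hab h)
    exact mul_le_mul_of_nonpos_left this h

lemma mul_tanh_strictMono {t : ℝ} (ht : t ≠ 0) : StrictMono (fun θ => t * Real.tanh (θ * t)) := by
  refine (mul_tanh_mono t).strictMono_of_injective ?_
  intro a b hab
  simp only [mul_eq_mul_left_iff, ht, or_false] at hab
  exact mul_right_cancel₀ ht (tanh_strictMono'.injective hab)

lemma DD_anti (n : ℕ) (x : Fin n → Bool) : Antitone (DD n x) := by
  intro a b hab
  refine Finset.sum_le_sum fun i _ => ?_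
  have := mul_tanh_mono (tfield n x i) hab
  simp only at this
  linarith

lemma DD_strictAnti {n : ℕ} {x : Fin n → Bool} {i : Fin n} (hi : tfield n x i ≠ 0) :
    StrictAnti (DD n x) := by
  intro a b hab
  refine Finset.sum_lt_sum (fun i _ => ?_) ⟨i, Finset.mem_univ _, ?_⟩
  · have := mul_tanh_mono (tfield n x i) hab.le
    simp only at this
    linarith
  · have := mul_tanh_strictMono hi hab
    simp only at this
    linarith

lemma DD_cont (n : ℕ) (x : Fin n → Bool) : Continuous (DD n x) := by
  have := continuous_tanh'
  unfold DD; fun_prop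

lemma spin_abs (b : Bool) : |spin b| = 1 := by cases b <;> simp [spin]

lemma spin_sq (b : Bool) : spin b * spin b = 1 := by cases b <;> simp [spin]

lemma unique_of_signs {n : ℕ} {x : Fin n → Bool} {i j : Fin n}
    (hi : spin (x i) * tfield n x i < 0) (hj : 0 < spin (x j) * tfield n x j) :
    ∃! θ, IsMaxOn (PLobj n x) Set.univ θ := by
  have hle : ∀ k, |spin (x k) * tfield n x k| = |tfield n x k| := by
    intro k; rw [abs_mul, spin_abs, one_mul]
  have lim1 : Tendsto (DD n x) atTop (nhds (∑ k, (spin (x k) * tfield n x k - |tfield n x k|))) :=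
    tendsto_finsetSum _ fun k _ => (tendsto_mul_tanh _).const_sub _
  have neg1 : ∑ k, (spin (x k) * tfield n x k - |tfield n x k|) < 0 := by
    refine Finset.sum_neg' (fun k _ => ?_) ⟨i, Finset.mem_univ _, ?_⟩
    · rw [← hle]; linarith [le_abs_self (spin (x k) * tfield n x k)]
    · linarith [abs_nonneg (tfield n x i)]
  have lim2 : Tendsto (fun θ => DD n x (-θ)) atTop
      (nhds (∑ k, (spin (x k) * tfield n x k + |tfield n x k|))) := by
    refine tendsto_finsetSum _ fun k _ => ?_
    refine ((tendsto_mul_tanh _).const_add _).congr fun θ => ?_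
    rw [neg_mul, Real.tanh_neg]; ring
  have pos2 : 0 < ∑ k, (spin (x k) * tfield n x k + |tfield n x k|) := by
    refine Finset.sum_pos' (fun k _ => ?_) ⟨j, Finset.mem_univ _, ?_⟩
    · rw [← hle]; linarith [neg_abs_le (spin (x k) * tfield n x k)]
    · linarith [abs_nonneg (tfield n x j)]
  obtain ⟨T2, h2⟩ := (lim1.eventually (gt_mem_nhds neg1)).exists
  obtain ⟨T1, h1⟩ := (lim2.eventually (lt_mem_nhds pos2)).exists
  have hne : tfield n x i ≠ 0 := by
    intro h; rw [h] at hi; simp at hi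
  exact unique_max (hasDerivAt_PL n x) (DD_strictAnti hne) (DD_cont n x) h1 h2

lemma tfield_eq (n : ℕ) (x : Fin n → Bool) (i : Fin n) :
    tfield n x i = mag n x - spin (x i) / n := by
  unfold tfield Qcw mag
  have : ∀ j, (if i = j then (0:ℝ) else 1 / n) * spin (x j) =
      spin (x j) / n - (if i = j then spin (x j) / n else 0) := by
    intro j; split_ifs <;> ring
  simp_rw [this]
  rw [Finset.sum_sub_distrib, Finset.sum_ite_eq, ← Finset.sum_div]
  simp

lemma mag_abs_le {n : ℕ} (hn : 0 < n) (x : Fin n → Bool) : |mag n x| ≤ 1 := by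
  unfold mag
  rw [abs_div, Nat.abs_cast, div_le_one (by positivity)]
  calc |∑ i, spin (x i)| ≤ ∑ i, |spin (x i)| := Finset.abs_sum_le_sum_abs _ _
    _ = n := by simp [spin_abs]

lemma DD_approx {n : ℕ} (hn : 0 < n) (x : Fin n → Bool) (τ : ℝ) :
    |DD n x τ - n * (|mag n x| * (|mag n x| - Real.tanh (τ * |mag n x|)))| ≤ 2 + |τ| := by
  have hn' : (0:ℝ) < n := by positivity
  set M := mag n x with hM
  have e0 : |M| * (|M| - Real.tanh (τ * |M|)) = M * (M - Real.tanh (τ * M)) := by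
    rcases abs_cases M with h | h
    · rw [h.1]
    · rw [h.1, mul_neg, Real.tanh_neg]; ring
  rw [e0]
  have e1 : ∑ i, spin (x i) * tfield n x i = n * M ^ 2 - 1 := by
    simp_rw [tfield_eq, mul_sub, mul_div_assoc', spin_sq]
    rw [Finset.sum_sub_distrib, ← Finset.sum_mul, ← n_mag hn, ← hM]
    simp
    field_simp
  have e2 : DD n x τ - n * (M * (M - Real.tanh (τ * M))) =
      -1 - ∑ i, (tfield n x i * Real.tanh (τ * tfield n x i) - M * Real.tanh (τ * M)) := by
    unfold DD
    rw [Finset.sum_sub_distrib, e1, Finset.sum_sub_distrib]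
    simp
    ring
  have e3 : ∀ i, |tfield n x i * Real.tanh (τ * tfield n x i) - M * Real.tanh (τ * M)| ≤
      (1 + |τ|) / n := by
    intro i
    set t := tfield n x i with ht
    have h1 : |t - M| = 1 / n := by
      rw [ht, tfield_eq, ← hM, sub_sub_cancel_left, abs_neg, abs_div, spin_abs, Nat.abs_cast]
    have h2 : t * Real.tanh (τ * t) - M * Real.tanh (τ * M) =
      (t - M) * Real.tanh (τ * t) + M * (Real.tanh (τ * t) - Real.tanh (τ * M)) := by ring
    have h3 : |(t - M) * Real.tanh (τ * t)| ≤ 1 / n := by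
      rw [abs_mul, h1]
      exact mul_le_of_le_one_right (by positivity) (Real.abs_tanh_lt_one _).le
    have h4 : |M * (Real.tanh (τ * t) - Real.tanh (τ * M))| ≤ |τ| / n := by
      rw [abs_mul]
      have h5 : |Real.tanh (τ * t) - Real.tanh (τ * M)| ≤ |τ| / n := by
        refine tanh_lip.trans (le_of_eq ?_)
        rw [← mul_sub, abs_mul, h1]; ring
      exact (mul_le_of_le_one_left (abs_nonneg _) (mag_abs_le hn x)).trans h5
    rw [h2, add_div]
    exact (abs_add_le _ _).trans (add_le_add h3 h4)
  have e4 : |∑ i, (tfield n x i * Real.tanh (τ * tfield n x i) - M * Real.tanh (τ * M))| ≤ 1 + |τ| := by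
    refine (Finset.abs_sum_le_sum_abs _ _).trans ((Finset.sum_le_sum fun i _ => e3 i).trans ?_)
    simp
    field_simp
    exact le_rfl
  rw [e2]
  rw [abs_le] at e4 ⊢
  constructor <;> linarith [e4.1, e4.2]

lemma good_unique {n : ℕ} (hn : 0 < n) (x : Fin n → Bool) (h1 : 1 < n * |mag n x|)
    (h2 : |mag n x| < 1) : ∃! θ, IsMaxOn (PLobj n x) Set.univ θ := by
  have hn' : (0:ℝ) < n := by positivity
  set M := mag n x with hM
  have hs : ∀ i, spin (x i) = 1 ∨ spin (x i) = -1 := by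
    intro i; cases x i <;> simp [spin]
  have hsum : ∑ i, spin (x i) = n * M := (n_mag hn x).symm
  have ht : ∀ i, n * (spin (x i) * tfield n x i) = spin (x i) * (n * M) - 1 := by
    intro i; rw [tfield_eq, ← hM, mul_sub, mul_div_assoc', spin_sq]; field_simp
  have hM0 : M ≠ 0 := by
    rintro h; rw [h] at h1; simp at h1; linarith
  -- there are a spin opposite to, and a spin equal to, the sign of M
  obtain ⟨i, hi⟩ : ∃ i, spin (x i) * M < 0 := by
    by_contra! hcon
    have : ∀ i, spin (x i) * M = |M| := by
      intro i; rw [← abs_of_nonneg (hcon i), abs_mul, spin_abs, one_mul]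
    have h3 : ∑ i, spin (x i) * M = n * |M| := by simp [this]
    rw [← Finset.sum_mul, hsum, mul_assoc] at h3
    have h4 := mul_left_cancel₀ hn'.ne' h3
    rw [← abs_mul_abs_self] at h4
    have : 0 < |M| := abs_pos.2 hM0
    nlinarith
  obtain ⟨j, hj⟩ : ∃ j, 0 < spin (x j) * M := by
    by_contra! hcon
    have h3 : ∑ i, spin (x i) * M ≤ 0 := Finset.sum_nonpos fun i _ => hcon i
    rw [← Finset.sum_mul, hsum, mul_assoc] at h3
    have : 0 < n * (M * M) := mul_pos hn' (mul_self_pos.2 hM0)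
    linarith
  refine unique_of_signs (i := i) (j := j) ?_ ?_
  · have := ht i
    by_contra! hcon
    have h5 : 0 ≤ n * (spin (x i) * tfield n x i) := by positivity
    have : n * (spin (x i) * M) < 0 := mul_neg_of_pos_of_neg hn' hi
    linarith
  · have := ht j
    by_contra! hcon
    have h5 : n * (spin (x j) * tfield n x j) ≤ 0 := mul_nonpos_of_nonneg_of_nonpos hn'.le hcon
    have : spin (x j) * M = |M| := by rw [← abs_of_pos hj, abs_mul, spin_abs, one_mul]
    have : n * (spin (x j) * M) = n * |M| := by rw [this]
    linarith

lemma curve_tendsto {θ m : ℝ} (hmt : Real.tanh (θ * m) = m) (t u : ℝ) :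
    Tendsto (fun n : ℕ => √(n:ℝ) * ((m + u / √n) - Real.tanh ((θ + t / √n) * (m + u / √n)))) atTop
      (nhds ((1 - θ * (1 - m ^ 2)) * u - m * (1 - m ^ 2) * t)) := by
  have hd : HasDerivAt (fun r : ℝ => (m + u * r) - Real.tanh ((θ + t * r) * (m + u * r)))
      ((1 - θ * (1 - m ^ 2)) * u - m * (1 - m ^ 2) * t) 0 := by
    have h1 : HasDerivAt (fun r : ℝ => m + u * r) u 0 := by
      simpa using ((hasDerivAt_id (0:ℝ)).const_mul u).const_add m
    have h2 : HasDerivAt (fun r : ℝ => θ + t * r) t 0 := by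
      simpa using ((hasDerivAt_id (0:ℝ)).const_mul t).const_add θ
    have h3 := h2.mul h1
    have h4 := hasDerivAt_tanh' ((θ + t * 0) * (m + u * 0))
    have h5 := h4.comp (0:ℝ) h3
    refine HasDerivAt.congr_deriv (f := fun r : ℝ => (m + u * r) - Real.tanh ((θ + t * r) * (m + u * r)))
      (h1.sub h5) ?_
    simp [hmt]; ring
  have hs : Tendsto (fun n : ℕ => (√(n:ℝ))⁻¹) atTop (nhdsWithin 0 {0}ᶜ) := by
    refine tendsto_nhdsWithin_iff.2 ⟨tendsto_inv_atTop_zero.comp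
      (Real.tendsto_sqrt_atTop.comp tendsto_natCast_atTop_atTop), ?_⟩
    filter_upwards [eventually_gt_atTop 0] with n hn
    have : (0:ℝ) < √n := by positivity
    simp [this.ne']
  have := hd.tendsto_slope.comp hs
  refine this.congr fun n => ?_
  simp [slope_def_field, hmt, div_eq_mul_inv]
  ring


lemma sig2_pos {θ m : ℝ} (hθ : 1 < θ) (hm : 0 < m) (hmt : Real.tanh (θ * m) = m) :
    0 < sig2 θ m := by
  have hm1 := m_lt_one hθ hm hmt
  unfold sig2
  exact div_pos (by nlinarith) (kappa_pos hθ hm hmt)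

noncomputable def FF (θ m : ℝ) (n : ℕ) (s : ℝ) : ℝ := (cwMeasure n θ).real {x | UU n m x ≤ s}

lemma cdf_tendsto {θ m : ℝ} (hθ : 1 < θ) (hm : 0 < m) (hmt : Real.tanh (θ * m) = m) (s : ℝ) :
    Tendsto (fun n : ℕ => FF θ m n s) atTop
      (nhds (cdf (gaussianReal 0 (sig2 θ m).toNNReal) s)) := by
  have hv : (sig2 θ m).toNNReal ≠ 0 := by
    have := sig2_pos hθ hm hmt
    simpa using this
  have hp : ∀ n, IsProbabilityMeasure ((cwMeasure n θ).map (UU n m)) := fun n =>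
    Measure.isProbabilityMeasure_map (by fun_prop)
  have h := ProbabilityMeasure.tendsto_of_tendsto_charFun
    (μ := fun n => (⟨(cwMeasure n θ).map (UU n m), hp n⟩ : ProbabilityMeasure ℝ))
    (μ₀ := ⟨gaussianReal 0 (sig2 θ m).toNNReal, inferInstance⟩)
    (fun t => charFun_tendsto hθ hm hmt t)
  have h2 := ProbabilityMeasure.tendsto_measure_of_null_frontier_of_tendsto' h (E := Set.Iic s) (by
    show gaussianReal 0 (sig2 θ m).toNNReal (frontier (Set.Iic s)) = 0
    rw [frontier_Iic]
    have := nullSingletonClass_gaussianReal (μ := 0) hv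
    exact measure_singleton s)
  change Tendsto (fun n => (cwMeasure n θ).map (UU n m) (Set.Iic s)) atTop
    (nhds (gaussianReal 0 (sig2 θ m).toNNReal (Set.Iic s))) at h2
  rw [cdf_eq_real]
  have h3 := (ENNReal.tendsto_toReal
    (measure_ne_top (gaussianReal 0 (sig2 θ m).toNNReal) (Set.Iic s))).comp h2
  refine h3.congr fun n => ?_
  simp only [Function.comp]
  rw [Measure.map_apply (by fun_prop) measurableSet_Iic]
  rfl

lemma cdf_cont {v : NNReal} (hv : v ≠ 0) (s : ℝ) : ContinuousAt (cdf (gaussianReal 0 v)) s := by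
  have := nullSingletonClass_gaussianReal (μ := 0) hv
  have h1 : gaussianReal 0 v {s} = 0 := measure_singleton s
  rw [← measure_cdf (gaussianReal 0 v), StieltjesFunction.measure_singleton, ENNReal.ofReal_eq_zero] at h1
  rw [(monotone_cdf _).continuousAt_iff_leftLim_eq_rightLim, StieltjesFunction.rightLim_eq]
  have h2 := (monotone_cdf (gaussianReal 0 v)).leftLim_le (le_refl s)
  linarith

lemma FF_mono_sub {θ m : ℝ} {n : ℕ} {K : ℝ} :
    1 - FF θ m n K = (cwMeasure n θ).real {x | ¬ UU n m x ≤ K} := by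
  unfold FF
  have := probReal_compl_eq_one_sub (μ := cwMeasure n θ) (s := {x | UU n m x ≤ K})
    (MeasurableSet.of_discrete)
  rw [← this]; rfl

noncomputable def bad (θ m : ℝ) (n : ℕ) : ℝ :=
  (cwMeasure n θ).real {x | ¬ (m / 2 ≤ |mag n x| ∧ |mag n x| < 1)}

lemma sqrt_nat_top : Tendsto (fun n : ℕ => √(n:ℝ)) atTop atTop :=
  Real.tendsto_sqrt_atTop.comp tendsto_natCast_atTop_atTop

lemma bad_le {θ m : ℝ} (hθ : 1 < θ) (hm : 0 < m) (hmt : Real.tanh (θ * m) = m) (K : ℝ) :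
    ∀ᶠ n : ℕ in atTop, bad θ m n ≤ FF θ m n (-K) + (1 - FF θ m n K) := by
  have hm1 := m_lt_one hθ hm hmt
  have h1 := (sqrt_nat_top.atTop_mul_const (show 0 < m / 2 by positivity)).eventually_gt_atTop K
  have h2 := (sqrt_nat_top.atTop_mul_const (show 0 < 1 - m by linarith)).eventually_gt_atTop K
  filter_upwards [h1, h2] with n h1 h2
  rw [FF_mono_sub]
  unfold bad FF
  refine le_trans (measureReal_mono ?_) (measureReal_union_le _ _)
  intro x hx
  simp only [Set.mem_setOf_eq, not_and_or, not_le, not_lt, Set.mem_union] at hx ⊢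
  unfold UU
  have hr : 0 ≤ √(n:ℝ) := Real.sqrt_nonneg _
  rcases hx with hx | hx
  · left
    have : √(n:ℝ) * (|mag n x| - m) ≤ √(n:ℝ) * (-(m / 2)) := by gcongr; linarith
    linarith
  · right
    have : √(n:ℝ) * (1 - m) ≤ √(n:ℝ) * (|mag n x| - m) := by gcongr
    linarith

lemma bad_tendsto {θ m : ℝ} (hθ : 1 < θ) (hm : 0 < m) (hmt : Real.tanh (θ * m) = m) :
    Tendsto (fun n => bad θ m n) atTop (nhds 0) := by
  set g := cdf (gaussianReal 0 (sig2 θ m).toNNReal)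
  have hK : Tendsto (fun K => g (-K) + (1 - g K)) atTop (nhds 0) := by
    have h1 := (tendsto_cdf_atBot (gaussianReal 0 (sig2 θ m).toNNReal)).comp tendsto_neg_atTop_atBot
    have h2 := (tendsto_cdf_atTop (gaussianReal 0 (sig2 θ m).toNNReal)).const_sub 1
    simpa using h1.add h2
  refine tendsto_order.2 ⟨fun a ha => Eventually.of_forall fun n => ha.trans_le measureReal_nonneg,
    fun a ha => ?_⟩
  obtain ⟨K, hKa⟩ := (hK.eventually (gt_mem_nhds ha)).exists
  have h3 := (cdf_tendsto hθ hm hmt (-K)).add ((cdf_tendsto hθ hm hmt K).const_sub 1)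
  filter_upwards [bad_le hθ hm hmt K, h3.eventually (gt_mem_nhds hKa)] with n h1 h2
  exact h1.trans_lt h2

lemma good_ev {m : ℝ} (hm : 0 < m) : ∀ᶠ n : ℕ in atTop, ∀ x : Fin n → Bool,
    m / 2 ≤ |mag n x| → |mag n x| < 1 → ∃! θ, IsMaxOn (PLobj n x) Set.univ θ := by
  have h1 := ((tendsto_natCast_atTop_atTop (R := ℝ)).atTop_mul_const
    (show 0 < m / 2 by positivity)).eventually_gt_atTop 1
  filter_upwards [h1, eventually_gt_atTop 0] with n h1 hn x h2 h3
  refine good_unique hn x (h1.trans_le ?_) h3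
  gcongr

noncomputable def EE (θ t : ℝ) (n : ℕ) : Set (Fin n → Bool) :=
  {x | ∃ θh : ℝ, (IsMaxOn (PLobj n x) Set.univ θh ∧
      ∀ θ' : ℝ, IsMaxOn (PLobj n x) Set.univ θ' → θ' = θh) ∧ Real.sqrt (n : ℝ) * (θh - θ) ≤ t}

lemma max_DD {n : ℕ} {x : Fin n → Bool} {θ : ℝ} (h : IsMaxOn (PLobj n x) Set.univ θ) :
    DD n x θ = 0 :=
  (h.isLocalMax univ_mem).hasDerivAt_eq_zero (hasDerivAt_PL n x θ)

lemma kap_mul {θ m : ℝ} (hθ : 1 < θ) (hm : 0 < m) (hmt : Real.tanh (θ * m) = m) (t d : ℝ) :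
    (1 - θ * (1 - m ^ 2)) * (m * sig2 θ m * t + d) - m * (1 - m ^ 2) * t =
      (1 - θ * (1 - m ^ 2)) * d := by
  have := kappa_pos hθ hm hmt
  unfold sig2; field_simp; ring

lemma tau_ev {θ : ℝ} (hθ : 1 < θ) (t : ℝ) :
    ∀ᶠ n : ℕ in atTop, 0 < θ + t / √(n:ℝ) ∧ θ + t / √(n:ℝ) < θ + 1 := by
  have h : Tendsto (fun n : ℕ => θ + t / √(n:ℝ)) atTop (nhds (θ + 0)) :=
    (tendsto_const_nhds.div_atTop sqrt_nat_top).const_add θ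
  exact (h.eventually (lt_mem_nhds (by linarith))).and (h.eventually (gt_mem_nhds (by linarith)))

lemma upper {θ m : ℝ} (hθ : 1 < θ) (hm : 0 < m) (hmt : Real.tanh (θ * m) = m) (t : ℝ) {δ : ℝ}
    (hδ : 0 < δ) : ∀ᶠ n : ℕ in atTop, EE θ t n ⊆ {x | UU n m x ≤ m * sig2 θ m * t + δ} := by
  have hκ := kappa_pos hθ hm hmt
  have hc := curve_tendsto hmt t (m * sig2 θ m * t + δ)
  rw [kap_mul hθ hm hmt] at hc
  set κ := 1 - θ * (1 - m ^ 2)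
  set u := m * sig2 θ m * t + δ
  have hη : 0 < κ * δ := by positivity
  have hc' := hc.eventually (lt_mem_nhds (half_lt_self hη))
  have ha : ∀ᶠ n : ℕ in atTop, m / 2 < m + u / √(n:ℝ) := by
    have h : Tendsto (fun n : ℕ => m + u / √(n:ℝ)) atTop (nhds (m + 0)) :=
      (tendsto_const_nhds.div_atTop sqrt_nat_top).const_add m
    exact h.eventually (lt_mem_nhds (by linarith))
  have hbig := (sqrt_nat_top.atTop_mul_const
    (show 0 < m / 2 * (κ * δ / 2) by positivity)).eventually_gt_atTop (3 + θ)
  filter_upwards [hc', ha, hbig, tau_ev hθ t, eventually_gt_atTop 0] with n hc' ha hbig hτ hn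
  intro x hx
  obtain ⟨θh, ⟨hmax, -⟩, hle⟩ := hx
  simp only [Set.mem_setOf_eq]
  by_contra! hU
  have hn' : (0:ℝ) < n := by positivity
  have hr : 0 < √(n:ℝ) := by positivity
  have hnr : (n:ℝ) = √n * √n := (Real.mul_self_sqrt hn'.le).symm
  set a := |mag n x| with had
  set r := √(n:ℝ) with hrd
  set τ := θ + t / r with hτd
  set a1 := m + u / r with ha1
  have ha1a : a1 ≤ a := by
    unfold UU at hU
    have : u / r < a - m := by rw [div_lt_iff₀ hr]; linarith
    linarith
  have hθh : θh ≤ τ := by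
    have : θh - θ ≤ t / r := by rw [le_div_iff₀ hr]; linarith
    linarith
  have hD : DD n x τ ≤ 0 := by
    rw [← max_DD hmax]; exact DD_anti n x hθh
  have h1 := tanh_ratio hτ.1 (by linarith : 0 ≤ a1) ha1a
  have hf : κ * δ / 2 < r * (a - Real.tanh (τ * a)) := by
    have h2 : a * (a1 - Real.tanh (τ * a1)) ≤ a1 * (a - Real.tanh (τ * a)) := by linarith
    have h3 : 0 < a1 - Real.tanh (τ * a1) := by
      by_contra! h
      have : r * (a1 - Real.tanh (τ * a1)) ≤ 0 := mul_nonpos_of_nonneg_of_nonpos hr.le h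
      linarith
    have h4 : a1 * (a1 - Real.tanh (τ * a1)) ≤ a1 * (a - Real.tanh (τ * a)) :=
      le_trans (by gcongr) h2
    have h5 := le_of_mul_le_mul_left h4 (by linarith)
    exact hc'.trans_le (by gcongr)
  have happ := (abs_le.1 (DD_approx hn x τ)).1
  rw [abs_of_pos hτ.1, ← had] at happ
  have h6 : n * (a * (a - Real.tanh (τ * a))) = r * (a * (r * (a - Real.tanh (τ * a)))) := by
    rw [hnr]; ring
  have h7 : m / 2 * (κ * δ / 2) ≤ a * (r * (a - Real.tanh (τ * a))) := by
    apply mul_le_mul <;> first | linarith | positivity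
  have h8 : r * (m / 2 * (κ * δ / 2)) ≤ r * (a * (r * (a - Real.tanh (τ * a)))) := by gcongr
  linarith [hτ.2]

lemma lower {θ m : ℝ} (hθ : 1 < θ) (hm : 0 < m) (hmt : Real.tanh (θ * m) = m) (t : ℝ) {δ : ℝ}
    (hδ : 0 < δ) : ∀ᶠ n : ℕ in atTop, {x | UU n m x ≤ m * sig2 θ m * t + -δ} ⊆
      EE θ t n ∪ {x | ¬ (m / 2 ≤ |mag n x| ∧ |mag n x| < 1)} := by
  have hκ := kappa_pos hθ hm hmt
  have hm1 := m_lt_one hθ hm hmt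
  have hc := curve_tendsto hmt t (m * sig2 θ m * t + -δ)
  rw [kap_mul hθ hm hmt] at hc
  set κ := 1 - θ * (1 - m ^ 2)
  set u := m * sig2 θ m * t + -δ
  have hη : 0 < κ * δ := by positivity
  have hc' := hc.eventually (gt_mem_nhds (show κ * -δ < -(κ * δ / 2) by linarith))
  have ha : ∀ᶠ n : ℕ in atTop, m + u / √(n:ℝ) < 2 := by
    have h : Tendsto (fun n : ℕ => m + u / √(n:ℝ)) atTop (nhds (m + 0)) :=
      (tendsto_const_nhds.div_atTop sqrt_nat_top).const_add m
    exact h.eventually (gt_mem_nhds (by linarith))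
  have hbig := (sqrt_nat_top.atTop_mul_const
    (show 0 < m / 2 * (m / 2 * (κ * δ / 2) / 2) by positivity)).eventually_gt_atTop (3 + θ)
  filter_upwards [hc', ha, hbig, tau_ev hθ t, eventually_gt_atTop 0, good_ev hm]
    with n hc' ha hbig hτ hn hgood
  intro x hU
  by_cases hg : m / 2 ≤ |mag n x| ∧ |mag n x| < 1
  swap
  · right; exact hg
  left
  obtain ⟨θh, hmax, huniq⟩ := hgood x hg.1 hg.2
  refine ⟨θh, ⟨hmax, huniq⟩, ?_⟩
  by_contra! hgt
  simp only [Set.mem_setOf_eq] at hU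
  have hn' : (0:ℝ) < n := by positivity
  have hr : 0 < √(n:ℝ) := by positivity
  have hnr : (n:ℝ) = √n * √n := (Real.mul_self_sqrt hn'.le).symm
  set a := |mag n x| with had
  set r := √(n:ℝ) with hrd
  set τ := θ + t / r with hτd
  set a1 := m + u / r with ha1
  have ha1a : a ≤ a1 := by
    unfold UU at hU
    have : a - m ≤ u / r := by rw [le_div_iff₀ hr]; linarith
    linarith
  have hθh : τ ≤ θh := by
    have : t / r < θh - θ := by rw [div_lt_iff₀ hr]; linarith
    linarith
  have hD : 0 ≤ DD n x τ := by
    rw [← max_DD hmax]; exact DD_anti n x hθh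
  have ha0 : 0 < a := by linarith [hg.1]
  have h1 := tanh_ratio hτ.1 ha0.le ha1a
  set f := Real.tanh (τ * a) - a with hfd
  have hf : m / 2 * (κ * δ / 2) / 2 ≤ r * f := by
    have h2 : a * (Real.tanh (τ * a1) - a1) ≤ a1 * f := by rw [hfd]; linarith
    have h3 : κ * δ / 2 ≤ r * (Real.tanh (τ * a1) - a1) := by linarith
    have h4 : m / 2 * (κ * δ / 2) ≤ a * (r * (Real.tanh (τ * a1) - a1)) := by
      apply mul_le_mul hg.1 h3 <;> positivity
    have h5 : r * (a * (Real.tanh (τ * a1) - a1)) ≤ r * (a1 * f) := by gcongr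
    have h6 : m / 2 * (κ * δ / 2) ≤ a1 * (r * f) := by linarith
    have h7 : 0 < r * f := by
      by_contra! h
      have : a1 * (r * f) ≤ 0 := mul_nonpos_of_nonneg_of_nonpos (by linarith) h
      have : 0 < m / 2 * (κ * δ / 2) := by positivity
      linarith
    have h8 : a1 * (r * f) ≤ 2 * (r * f) := by gcongr
    linarith
  have happ := (abs_le.1 (DD_approx hn x τ)).2
  rw [abs_of_pos hτ.1, ← had] at happ
  have h6 : n * (a * (a - Real.tanh (τ * a))) = -(r * (a * (r * f))) := by
    rw [hnr, hfd]; ring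
  have h7 : m / 2 * (m / 2 * (κ * δ / 2) / 2) ≤ a * (r * f) := by
    apply mul_le_mul hg.1 hf <;> positivity
  have h8 : r * (m / 2 * (m / 2 * (κ * δ / 2) / 2)) ≤ r * (a * (r * f)) := by gcongr
  linarith [hτ.2]

lemma EE_tendsto {θ m : ℝ} (hθ : 1 < θ) (hm : 0 < m) (hmt : Real.tanh (θ * m) = m) (t : ℝ) :
    Tendsto (fun n : ℕ => (cwMeasure n θ).real (EE θ t n)) atTop
      (nhds (cdf (gaussianReal 0 (sig2 θ m).toNNReal) (m * sig2 θ m * t))) := by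
  have hv : (sig2 θ m).toNNReal ≠ 0 := by
    have := sig2_pos hθ hm hmt
    simpa using this
  set g := cdf (gaussianReal 0 (sig2 θ m).toNNReal)
  set u := m * sig2 θ m * t with hu
  have hcont : Tendsto (fun d => g (u + d)) (nhds 0) (nhds (g u)) := by
    have h1 : Tendsto (fun d => u + d) (nhds 0) (nhds u) := by
      have : Continuous (fun d : ℝ => u + d) := by fun_prop
      simpa using this.tendsto 0
    exact (cdf_cont hv u).tendsto.comp h1
  refine tendsto_order.2 ⟨fun a ha => ?_, fun a ha => ?_⟩
  · have h1 : ∀ᶠ d in nhdsWithin (0:ℝ) (Set.Ioi 0), a < g (u + -d) := by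
      have : Tendsto (fun d : ℝ => -d) (nhdsWithin 0 (Set.Ioi 0)) (nhds 0) := by
        have : Tendsto (fun d : ℝ => -d) (nhds 0) (nhds 0) := by
          simpa using (continuous_neg (G := ℝ)).tendsto 0
        exact this.mono_left nhdsWithin_le_nhds
      exact (hcont.comp this).eventually (lt_mem_nhds ha)
    obtain ⟨δ, hδa, hδ⟩ := (h1.and self_mem_nhdsWithin).exists
    have h2 := (cdf_tendsto hθ hm hmt (u + -δ)).sub (bad_tendsto hθ hm hmt)
    rw [sub_zero] at h2
    filter_upwards [h2.eventually (lt_mem_nhds hδa), lower hθ hm hmt t hδ] with n h3 h4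
    have h5 := (measureReal_mono (μ := cwMeasure n θ) h4).trans (measureReal_union_le _ _)
    unfold FF bad at h3
    linarith
  · have h1 : ∀ᶠ d in nhdsWithin (0:ℝ) (Set.Ioi 0), g (u + d) < a :=
      (hcont.eventually (gt_mem_nhds ha)).filter_mono nhdsWithin_le_nhds
    obtain ⟨δ, hδa, hδ⟩ := (h1.and self_mem_nhdsWithin).exists
    have h2 := (cdf_tendsto hθ hm hmt (u + δ))
    filter_upwards [h2.eventually (gt_mem_nhds hδa), upper hθ hm hmt t hδ] with n h3 h4
    exact (measureReal_mono (μ := cwMeasure n θ) h4).trans_lt h3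

lemma gauss_scale {s : ℝ} (hs : 0 < s) {m : ℝ} (hm : 0 < m) (t : ℝ) :
    gaussianReal 0 s.toNNReal (Set.Iic (m * s * t)) =
      gaussianReal 0 1 (Set.Iic (t * √(m ^ 2 * s))) := by
  have h := gaussianReal_map_const_mul (μ := 0) (v := 1) (√s)
  have e : (NNReal.mk (√s ^ 2) (sq_nonneg _) * 1 : NNReal) = s.toNNReal := by
    ext
    rw [Real.coe_toNNReal _ hs.le]
    simp [Real.sq_sqrt hs.le]
  rw [mul_zero, e] at h
  rw [← h, Measure.map_apply (by fun_prop) measurableSet_Iic]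
  congr 1
  ext y
  have hr : 0 < √s := by positivity
  simp only [Set.mem_preimage, Set.mem_Iic]
  rw [Real.sqrt_mul (by positivity), Real.sqrt_sq hm.le]
  have : m * s * t = √s * (t * (m * √s)) := by
    conv_lhs => rw [← Real.mul_self_sqrt hs.le]
    ring
  rw [this, mul_le_mul_iff_right₀ hr]

theorem stmt19 (θ₀ : ℝ) (hθ : 1 < θ₀) (m : ℝ → ℝ)
    (hm : ∀ θ : ℝ, 1 < θ → 0 < m θ ∧ Real.tanh (θ * m θ) = m θ) :
    Tendsto (fun n : ℕ =>
        cwMeasure n θ₀ {x | ∃! θh : ℝ, IsMaxOn (PLobj n x) Set.univ θh})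
      atTop (nhds 1) ∧
    ∀ t : ℝ,
      Tendsto (fun n : ℕ =>
          cwMeasure n θ₀ {x | ∃ θh : ℝ,
            (IsMaxOn (PLobj n x) Set.univ θh ∧
              ∀ θ' : ℝ, IsMaxOn (PLobj n x) Set.univ θ' → θ' = θh) ∧
            Real.sqrt (n : ℝ) * (θh - θ₀) ≤ t})
        atTop
        (nhds (gaussianReal 0 1 (Set.Iic (t *
          Real.sqrt (m θ₀ ^ 2 * ((1 - m θ₀ ^ 2) / (1 - θ₀ * (1 - m θ₀ ^ 2)))))))) := by
  obtain ⟨hm0, hmt⟩ := hm θ₀ hθ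
  constructor
  · have h1 : Tendsto (fun n : ℕ => 1 - bad θ₀ (m θ₀) n) atTop (nhds 1) := by
      simpa using (bad_tendsto hθ hm0 hmt).const_sub 1
    have h2 : Tendsto (fun n : ℕ => (cwMeasure n θ₀).real
        {x | ∃! θh : ℝ, IsMaxOn (PLobj n x) Set.univ θh}) atTop (nhds 1) := by
      refine tendsto_of_tendsto_of_tendsto_of_le_of_le' h1 tendsto_const_nhds ?_
        (Eventually.of_forall fun n => measureReal_le_one)
      filter_upwards [good_ev hm0] with n hg
      unfold bad
      have e := probReal_compl_eq_one_sub (μ := cwMeasure n θ₀)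
        (s := {x | ¬ (m θ₀ / 2 ≤ |mag n x| ∧ |mag n x| < 1)}) (MeasurableSet.of_discrete)
      rw [← e]
      refine measureReal_mono ?_ (measure_ne_top _ _)
      intro x hx
      simp only [Set.mem_compl_iff, Set.mem_setOf_eq, not_not] at hx
      exact hg x hx.1 hx.2
    have h3 := ENNReal.tendsto_ofReal h2
    rw [ENNReal.ofReal_one] at h3
    exact h3.congr fun n => ofReal_measureReal
  · intro t
    have h1 := ENNReal.tendsto_ofReal (EE_tendsto hθ hm0 hmt t)
    rw [ofReal_cdf, gauss_scale (sig2_pos hθ hm0 hmt) hm0] at h1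
    exact h1.congr fun n => ofReal_measureReal
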